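/- Let m > 1 divide n and write n = n₁n₂ where every prime dividing n₁ divides n/m and gcd(n₂, n/m) = 1. Let a ∈ [1,n]^m and c ∈ C(m). Then there exists b ∈ [1,n]^m such that the triple (a, b, c) defines an (n,m)-piecewise affine permutation of [1,n] if and only if every entry a_i of a is relatively prime to n₁; and in that case there are exactly (n/m)^m choices of b for which (a,b,c) is (n,m)-admissible. -/

import Mathlib

/-- `psi k x` is the representative of `x` mod `k` in `[1, k]`. -/
def psi (k x : ℕ) : ℕ := if x % k = 0 then k else x % k

/-- `π` is an `(n,m)`-piecewise affine permutation of `[1,n]` with parameters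
`(a, b, c)`: it permutes `[1,n]` (and is the identity elsewhere), the entries of
`a, b` lie in `[1,n]`, the entries of `c` form a permutation of `[1,m]`, and for
`x ∈ [1,n]` with `Ψ_m(x) = c_i` one has `π(x) = Ψ_n(a_i x + b_i)` and
`Ψ_m(π(x)) = c_{i+1}`, indices cyclic modulo `m`. -/
def IsPAP (n m : ℕ) [NeZero m] (a b c : Fin m → ℕ) (π : ℕ → ℕ) : Prop :=
  Set.BijOn π (Set.Icc 1 n) (Set.Icc 1 n) ∧
  (∀ x : ℕ, x ∉ Set.Icc 1 n → π x = x) ∧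
  (∀ i, a i ∈ Set.Icc 1 n) ∧ (∀ i, b i ∈ Set.Icc 1 n) ∧
  (∀ i, c i ∈ Set.Icc 1 m) ∧ Function.Injective c ∧
  ∀ x ∈ Set.Icc 1 n, ∀ i, psi m x = c i →
    π x = psi n (a i * x + b i) ∧ psi m (π x) = c (i + 1)

lemma psi_modEq (k x : ℕ) : psi k x ≡ x [MOD k] := by
  unfold psi
  split_ifs with h
  · simp [Nat.ModEq, h]
  · exact Nat.mod_modEq x k

lemma psi_mem (k x : ℕ) (hk : 0 < k) : psi k x ∈ Set.Icc 1 k := by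
  unfold psi
  have := Nat.mod_lt x hk
  rw [Set.mem_Icc]
  split_ifs with h <;> omega

lemma psi_congr {k x y : ℕ} (h : x ≡ y [MOD k]) : psi k x = psi k y := by
  unfold psi
  rw [show x % k = y % k from h]

lemma psi_self {k x : ℕ} (h : x ∈ Set.Icc 1 k) : psi k x = x := by
  unfold psi
  obtain ⟨h1, h2⟩ := h
  rcases h2.lt_or_eq with h2 | h2
  · rw [Nat.mod_eq_of_lt h2, if_neg (by omega)]
  · subst h2; simp

lemma coprime_aux (n k n₁ n₂ a : ℕ) (hkn : k ∣ n) (hsplit : n = n₁ * n₂)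
    (hrad : ∀ p : ℕ, p.Prime → p ∣ n₁ → p ∣ k) (hcop : Nat.Coprime n₂ k) :
    Nat.Coprime a n₁ ↔ Nat.Coprime a k := by
  constructor
  · intro h
    refine Nat.Coprime.coprime_dvd_right ?_ h
    exact hcop.symm.dvd_of_dvd_mul_right (hsplit ▸ hkn)
  · intro h
    refine Nat.coprime_of_dvd fun p hp hpa hpn => ?_
    exact Nat.not_coprime_of_dvd_of_dvd hp.one_lt hpa (hrad p hp hpn) h

lemma pap_iff (m k : ℕ) [NeZero m] (hk : 0 < k)
    (a b c : Fin m → ℕ) (ha : ∀ i, a i ∈ Set.Icc 1 (m * k))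
    (hc : ∀ i, c i ∈ Set.Icc 1 m) (hcinj : Function.Injective c) :
    (∃ π : ℕ → ℕ, IsPAP (m * k) m a b c π) ↔
      (∀ i, b i ∈ Set.Icc 1 (m * k) ∧ a i * c i + b i ≡ c (i + 1) [MOD m]) ∧
      ∀ i, Nat.Coprime (a i) k := by
  have hm0 : 0 < m := NeZero.pos m
  have hn0 : 0 < m * k := Nat.mul_pos hm0 hk
  have hcn : ∀ i, c i ∈ Set.Icc 1 (m * k) := fun i =>
    ⟨(hc i).1, (hc i).2.trans (Nat.le_mul_of_pos_right m hk)⟩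
  constructor
  · rintro ⟨π, hbij, -, -, hb, -, -, h⟩
    refine ⟨fun i => ⟨hb i, ?_⟩, fun i => ?_⟩
    · obtain ⟨h1, h2⟩ := h (c i) (hcn i) i (psi_self (hc i))
      rw [h1] at h2
      have e1 := psi_modEq m (psi (m * k) (a i * c i + b i))
      rw [h2] at e1
      exact (e1.trans ((psi_modEq (m * k) _).of_mul_right k)).symm
    · refine Nat.coprime_of_dvd fun p hp hpa hpk => ?_
      obtain ⟨q, rfl⟩ := hpk
      obtain ⟨r, hr⟩ := hpa
      have hq : 0 < q := Nat.pos_of_mul_pos_left hk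
      have hqlt : q + 1 ≤ p * q := by nlinarith [hp.two_le]
      have hy : c i + m * q ∈ Set.Icc 1 (m * (p * q)) := by
        refine ⟨by have := (hc i).1; omega, ?_⟩
        have := Nat.mul_le_mul_left m hqlt
        have := (hc i).2
        nlinarith
      have h1 := (h (c i) (hcn i) i (psi_self (hc i))).1
      have h2 := (h (c i + m * q) hy i
        ((psi_congr (by simp [Nat.ModEq])).trans (psi_self (hc i)))).1
      have e : π (c i + m * q) = π (c i) := by
        rw [h1, h2]
        apply psi_congr
        rw [hr, show p * r * (c i + m * q) + b i = p * r * c i + b i + m * (p * q) * r by ring]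
        simp [Nat.ModEq]
      have := hbij.injOn hy (hcn i) e
      have : 0 < m * q := Nat.mul_pos hm0 hq
      omega
  · rintro ⟨hb, hcop⟩
    have hsurj : ∀ y ∈ Set.Icc 1 m, ∃ i, c i = y := by
      intro y hy
      have himg : Finset.univ.image c = Finset.Icc 1 m := by
        apply Finset.eq_of_subset_of_card_le
        · intro z hz
          obtain ⟨i, -, rfl⟩ := Finset.mem_image.1 hz
          exact Finset.mem_Icc.2 (hc i)
        · rw [Finset.card_image_of_injective _ hcinj]; simp
      have : y ∈ Finset.univ.image c := himg ▸ Finset.mem_Icc.2 hy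
      simpa using this
    have hidx : ∀ x, ∃ i, psi m x = c i := fun x => by
      obtain ⟨i, hi⟩ := hsurj _ (psi_mem m x hm0)
      exact ⟨i, hi.symm⟩
    choose f hf using hidx
    have hcong : ∀ x, x ≡ c (f x) [MOD m] := fun x => by
      rw [← hf x]; exact (psi_modEq m x).symm
    classical
    let π : ℕ → ℕ := fun x => if x ∈ Set.Icc 1 (m * k) then
      psi (m * k) (a (f x) * x + b (f x)) else x
    have hπ : ∀ x ∈ Set.Icc 1 (m * k), π x = psi (m * k) (a (f x) * x + b (f x)) :=
      fun x hx => if_pos hx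
    have hπm : ∀ x ∈ Set.Icc 1 (m * k), psi m (π x) = c (f x + 1) := by
      intro x hx
      rw [hπ x hx, ← psi_self (hc (f x + 1))]
      apply psi_congr
      refine ((psi_modEq (m * k) _).of_mul_right k).trans (Nat.ModEq.trans ?_ (hb (f x)).2)
      exact ((hcong x).mul_left _).add_right _
    have hmaps : Set.MapsTo π (Set.Icc 1 (m * k)) (Set.Icc 1 (m * k)) := by
      intro x hx
      rw [hπ x hx]; exact psi_mem _ _ hn0
    have hinj : Set.InjOn π (Set.Icc 1 (m * k)) := by
      intro x hx y hy hxy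
      have hfe : f x = f y := by
        have := hπm x hx
        rw [hxy, hπm y hy] at this
        exact (add_right_cancel (hcinj this)).symm
      rw [hπ x hx, hπ y hy, hfe] at hxy
      have e1 : a (f y) * x + b (f y) ≡ a (f y) * y + b (f y) [MOD m * k] := by
        have := psi_modEq (m * k) (a (f y) * x + b (f y))
        rw [hxy] at this
        exact this.symm.trans (psi_modEq _ _)
      have e2 := (Nat.modEq_iff_dvd.1 (Nat.ModEq.add_right_cancel' _ e1))
      have e3 : x ≡ y [MOD m] := (hcong x).trans (hfe ▸ (hcong y).symm)
      obtain ⟨t, ht⟩ := Nat.modEq_iff_dvd.1 e3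
      have e4 : (k : ℤ) ∣ a (f y) * t := by
        have : ((m : ℤ) * k) ∣ m * (a (f y) * t) := by
          convert e2 using 1
          · push_cast; ring
          · push_cast; linear_combination (-(a (f y) : ℤ)) * ht
        exact Int.dvd_of_mul_dvd_mul_left (by exact_mod_cast hm0.ne') this
      have e5 : (k : ℤ) ∣ t :=
        (Nat.isCoprime_iff_coprime.2 (hcop (f y)).symm).dvd_of_dvd_mul_left e4
      have e6 : x ≡ y [MOD m * k] := by
        rw [Nat.modEq_iff_dvd, ht]; push_cast; exact mul_dvd_mul_left _ e5
      rw [← psi_self hx, ← psi_self hy]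
      exact psi_congr e6
    refine ⟨π, ⟨hmaps, hinj, ?_⟩, fun x hx => if_neg hx, ha, fun i => (hb i).1, hc, hcinj, ?_⟩
    · have himg : Set.image π (Set.Icc 1 (m * k)) = Set.Icc 1 (m * k) :=
        Set.eq_of_subset_of_ncard_le hmaps.image_subset
          hinj.ncard_image.ge (Set.finite_Icc 1 (m * k))
      exact himg.ge
    · intro x hx i hi
      have : f x = i := hcinj ((hf x).symm.trans hi)
      subst this
      exact ⟨hπ x hx, hπm x hx⟩

lemma count_aux (m k s t : ℕ) (hm0 : 0 < m) :
    ((Finset.Icc 1 (m * k)).filter (fun b => s + b ≡ t [MOD m])).card = k := by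
  have hv : ∀ b, s + b ≡ t [MOD m] ↔ b ≡ t + (m - 1) * s [MOD m] := by
    intro b
    have e : s + (t + (m - 1) * s) ≡ t [MOD m] := by
      obtain ⟨r, rfl⟩ : ∃ r, m = r + 1 := ⟨m - 1, by omega⟩
      rw [show s + (t + (r + 1 - 1) * s) = t + (r + 1) * s by simp; ring]
      simp [Nat.ModEq]
    exact ⟨fun h => Nat.ModEq.add_left_cancel' s (h.trans e.symm),
      fun h => (h.add_left s).trans e⟩
  simp_rw [hv]
  have := Nat.Ioc_filter_modEq_card 0 (m * k) hm0 (t + (m - 1) * s)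
  generalize t + (m - 1) * s = v at *
  have hI : Finset.Icc 1 (m * k) = Finset.Ioc 0 (m * k) := by ext; simp; omega
  rw [hI]
  have hq : (((m * k : ℕ) : ℚ) - v) / m = ((0 : ℕ) - (v : ℚ)) / m + (k : ℤ) := by
    field_simp; push_cast; ring
  rw [hq, Int.floor_add_intCast] at this
  zify
  rw [this]
  simp

/-- Given `a` with entries in `[1,n]` and `c` whose entries permute `[1,m]`,
some `b` makes `(a,b,c)` an `(n,m)`-admissible triple iff every `a_i` is coprime
to `n₁`; in that case there are exactly `(n/m)^m` such choices of `b`. -/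
theorem pap_admissible_iff_count (n m n₁ n₂ : ℕ) [NeZero m] (hm : 1 < m) (hmn : m ∣ n)
    (hsplit : n = n₁ * n₂) (hrad : ∀ p : ℕ, p.Prime → p ∣ n₁ → p ∣ n / m)
    (hcop : Nat.Coprime n₂ (n / m))
    (a c : Fin m → ℕ) (ha : ∀ i, a i ∈ Set.Icc 1 n)
    (hc : ∀ i, c i ∈ Set.Icc 1 m) (hcinj : Function.Injective c) :
    ((∃ b : Fin m → ℕ, ∃ π : ℕ → ℕ, IsPAP n m a b c π) ↔
        ∀ i, Nat.Coprime (a i) n₁) ∧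
    ((∀ i, Nat.Coprime (a i) n₁) →
      Set.ncard {b : Fin m → ℕ | ∃ π : ℕ → ℕ, IsPAP n m a b c π} = (n / m) ^ m) := by
  obtain ⟨k, rfl⟩ := hmn
  have hm0 : 0 < m := by omega
  have hk : 0 < k := by
    have h := ha 0
    rcases Nat.eq_zero_or_pos k with rfl | h'
    · simp at h
    · exact h'
  rw [Nat.mul_div_cancel_left k hm0] at *
  have hco : (∀ i, Nat.Coprime (a i) n₁) ↔ ∀ i, Nat.Coprime (a i) k :=
    forall_congr' fun i => coprime_aux (m * k) k n₁ n₂ (a i) (Dvd.intro_left m rfl) hsplit hrad hcop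
  have key := fun b => pap_iff m k hk a b c ha hc hcinj
  have hcount : (∀ i, Nat.Coprime (a i) n₁) →
      Set.ncard {b : Fin m → ℕ | ∃ π : ℕ → ℕ, IsPAP (m * k) m a b c π} = k ^ m := by
    intro h
    have hs : {b : Fin m → ℕ | ∃ π : ℕ → ℕ, IsPAP (m * k) m a b c π} =
        ((Fintype.piFinset fun i => (Finset.Icc 1 (m * k)).filter
          (fun b => a i * c i + b ≡ c (i + 1) [MOD m]) : Finset (Fin m → ℕ)) :
            Set (Fin m → ℕ)) := by
      ext b
      simp only [Set.mem_ofPred_eq, key, Finset.mem_coe, Fintype.mem_piFinset, Finset.mem_filter,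
        Finset.mem_Icc, Set.mem_Icc]
      exact ⟨fun h' => h'.1, fun h' => ⟨h', hco.1 h⟩⟩
    rw [hs, Set.ncard_coe_finset, Fintype.card_piFinset]
    simp [count_aux _ _ _ _ hm0]
  refine ⟨⟨?_, fun h => ?_⟩, hcount⟩
  · rintro ⟨b, hb⟩
    exact hco.2 ((key b).1 hb).2
  · have h1 := hcount h
    have h2 : 0 < k ^ m := Nat.pow_pos hk
    obtain ⟨b, hb⟩ := Set.nonempty_of_ncard_ne_zero (h1.trans_ne h2.ne')
    exact ⟨b, hb⟩
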